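/- arXiv:1509.02178 — 2 statements merged into one kernel-verified Lean document; each statement's English description precedes it below -/
import Mathlib

section
/- Let κ : [a,b] → ℝ be continuous and u : [a,b] → [0,∞) continuous. Then the following are equivalent: (i) u'' + κu ≤ 0 in the distributional sense, i.e. ∫ₐᵇ φ''(t)u(t) dt ≤ -∫ₐᵇ φ(t)κ(t)u(t) dt for all nonnegative φ ∈ C_c^∞((a,b)); (ii) for every constant speed geodesic γ : [0,1] → [a,b] with speed θ, u(γ(t)) ≥ (1-t)u(γ(0)) + t u(γ(1)) + ∫₀¹ g(t,s) κ(γ(s)) θ² u(γ(s)) ds, where g is the Green function of [0,1]. -/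
open Set

namespace DistGreen
open MeasureTheory Filter Topology

/-- second derivative of a mollification -/
lemma conv_derivs {ρ v : ℝ → ℝ} (hρ : ContDiff ℝ (⊤ : ℕ∞) ρ) (hc : HasCompactSupport ρ)
    (hv : Continuous v) :
    (∀ x, HasDerivAt (convolution ρ v (ContinuousLinearMap.lsmul ℝ ℝ) volume)
      (convolution (deriv ρ) v (ContinuousLinearMap.lsmul ℝ ℝ) volume x) x) ∧
    (∀ x, HasDerivAt (convolution (deriv ρ) v (ContinuousLinearMap.lsmul ℝ ℝ) volume)
      (convolution (deriv (deriv ρ)) v (ContinuousLinearMap.lsmul ℝ ℝ) volume x) x) := by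
  have h1 : ContDiff ℝ (⊤ : ℕ∞) (deriv ρ) := ContDiff.iterate_deriv 1 hρ
  refine ⟨fun x => ?_, fun x => ?_⟩
  · exact hc.hasDerivAt_convolution_left _ (hρ.of_le (by exact_mod_cast le_top))
      hv.locallyIntegrable x
  · exact hc.deriv.hasDerivAt_convolution_left _ (h1.of_le (by exact_mod_cast le_top))
      hv.locallyIntegrable x

lemma deriv2_reflect (ρ : ℝ → ℝ) (x s : ℝ) :
    deriv (deriv (fun s => ρ (x - s))) s = deriv (deriv ρ) (x - s) := by
  have h : deriv (fun s => ρ (x - s)) = fun s => -deriv ρ (x - s) := by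
    funext s; exact deriv_comp_const_sub ρ x s
  rw [h, deriv.fun_neg, deriv_comp_const_sub, neg_neg]

lemma support_deriv2 (φ : ℝ → ℝ) : Function.support (deriv (deriv φ)) ⊆ tsupport φ :=
  support_deriv_subset.trans (closure_minimal support_deriv_subset (isClosed_tsupport φ))

lemma conv_conc {a b : ℝ} {v ρ : ℝ → ℝ} (hv : Continuous v) {ε : ℝ}
    (H : ∀ φ : ℝ → ℝ, ContDiff ℝ (⊤ : ℕ∞) φ → HasCompactSupport φ → tsupport φ ⊆ Ioo a b →
        (∀ x, 0 ≤ φ x) → (∫ x in a..b, deriv (deriv φ) x * v x) ≤ 0)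
    (hρ : ContDiff ℝ (⊤ : ℕ∞) ρ) (hc : HasCompactSupport ρ)
    (hs : tsupport ρ ⊆ Metric.closedBall 0 ε) (h0 : ∀ x, 0 ≤ ρ x) :
    ConcaveOn ℝ (Ioo (a + ε) (b - ε))
      (convolution ρ v (ContinuousLinearMap.lsmul ℝ ℝ) volume) := by
  obtain ⟨d1, d2⟩ := conv_derivs hρ hc hv
  have e1 := funext fun x => (d1 x).deriv
  refine concaveOn_of_deriv2_nonpos (convex_Ioo _ _)
    (fun x _ => (d1 x).continuousAt.continuousWithinAt)
    (fun x _ => (d1 x).differentiableAt.differentiableWithinAt) ?_ ?_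
  · rw [e1]
    exact fun x _ => (d2 x).differentiableAt.differentiableWithinAt
  · intro x hx
    rw [interior_Ioo] at hx
    have e2 : deriv^[2] (convolution ρ v (ContinuousLinearMap.lsmul ℝ ℝ) volume) x =
        convolution (deriv (deriv ρ)) v (ContinuousLinearMap.lsmul ℝ ℝ) volume x := by
      simp only [Function.iterate_succ, Function.iterate_zero, Function.comp, id]
      rw [e1]; exact (d2 x).deriv
    rw [e2, convolution_eq_swap]
    have hts : tsupport (fun s => ρ (x - s)) ⊆ Ioo a b := by
      have h1 : tsupport (fun s => ρ (x - s)) ⊆ Metric.closedBall x ε := by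
        apply closure_minimal _ Metric.isClosed_closedBall
        intro s hs'
        have := hs (subset_tsupport _ (show x - s ∈ Function.support ρ from hs'))
        rw [Metric.mem_closedBall, Real.dist_eq, sub_zero, abs_sub_comm] at this
        rwa [Metric.mem_closedBall, Real.dist_eq]
      refine h1.trans fun s hs' => ?_
      rw [Metric.mem_closedBall, Real.dist_eq, abs_le] at hs'
      exact ⟨by linarith [hx.1, hs'.1], by linarith [hx.2, hs'.2]⟩
    have := H (fun s => ρ (x - s)) (hρ.comp (contDiff_const.sub contDiff_id))
      (hc.comp_homeomorph (Homeomorph.subLeft x)) hts (fun _ => h0 _)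
    rw [intervalIntegral.integral_eq_integral_of_support_subset] at this
    · simp only [deriv2_reflect] at this
      simpa using this
    · intro s hs'
      exact Ioo_subset_Ioc_self (hts (support_deriv2 _ (left_ne_zero_of_mul hs')))

lemma conc_open {a b : ℝ} {v : ℝ → ℝ} (hv : Continuous v)
    (H : ∀ φ : ℝ → ℝ, ContDiff ℝ (⊤ : ℕ∞) φ → HasCompactSupport φ → tsupport φ ⊆ Ioo a b →
        (∀ x, 0 ≤ φ x) → (∫ x in a..b, deriv (deriv φ) x * v x) ≤ 0)
    {x y t : ℝ} (hx : x ∈ Ioo a b) (hy : y ∈ Ioo a b) (ht : t ∈ Icc (0:ℝ) 1) :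
    (1 - t) * v x + t * v y ≤ v (x + t * (y - x)) := by
  let B : ℕ → ContDiffBump (0:ℝ) := fun n =>
    { rIn := 1 / ((n:ℝ) + 1) / 2
      rOut := 1 / ((n:ℝ) + 1)
      rIn_pos := by positivity
      rIn_lt_rOut := half_lt_self (by positivity) }
  have hB : Tendsto (fun n => (B n).rOut) atTop (𝓝 0) := tendsto_one_div_add_atTop_nhds_zero_nat
  have hL := fun z => ContDiffBump.convolution_tendsto_right_of_continuous (μ := volume) hB hv z
  refine le_of_tendsto_of_tendsto (((hL x).const_mul (1 - t)).add ((hL y).const_mul t))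
    (hL (x + t * (y - x))) ?_
  have hm : 0 < min (min (x - a) (b - x)) (min (y - a) (b - y)) := by
    simp only [lt_min_iff, sub_pos]; exact ⟨hx, hy⟩
  filter_upwards [hB.eventually (gt_mem_nhds hm)] with n hn
  simp only [lt_min_iff] at hn
  have := conv_conc hv H (ρ := (B n).normed volume) (ε := (B n).rOut)
    ((B n).contDiff_normed) (B n).hasCompactSupport_normed
    (B n).tsupport_normed_eq.le (fun z => (B n).nonneg_normed z)
  have := this.2 (x := x) ⟨by linarith, by linarith⟩ (y := y) ⟨by linarith, by linarith⟩
    (sub_nonneg.2 ht.2) ht.1 (by ring)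
  simp only [smul_eq_mul] at this
  rwa [show (1 - t) * x + t * y = x + t * (y - x) by ring] at this

lemma conc_closed {a b : ℝ} (hab : a < b) {v : ℝ → ℝ} (hv : Continuous v)
    (H : ∀ φ : ℝ → ℝ, ContDiff ℝ (⊤ : ℕ∞) φ → HasCompactSupport φ → tsupport φ ⊆ Ioo a b →
        (∀ x, 0 ≤ φ x) → (∫ x in a..b, deriv (deriv φ) x * v x) ≤ 0)
    {x y t : ℝ} (hx : x ∈ Icc a b) (hy : y ∈ Icc a b) (ht : t ∈ Icc (0:ℝ) 1) :
    (1 - t) * v x + t * v y ≤ v (x + t * (y - x)) := by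
  let p : ℝ → ℝ → ℝ := fun z d => (1 - d) * z + d * ((a + b) / 2)
  have hp0 : ∀ z, p z 0 = z := fun z => by simp [p]
  have hpc : ∀ z, Continuous (p z) := fun z => by fun_prop
  have c1 : Continuous fun d => (1 - t) * v (p x d) + t * v (p y d) := by fun_prop
  have c2 : Continuous fun d => v (p x d + t * (p y d - p x d)) := by fun_prop
  have l1 := (c1.tendsto 0).mono_left (nhdsWithin_le_nhds (s := Ioi 0))
  have l2 := (c2.tendsto 0).mono_left (nhdsWithin_le_nhds (s := Ioi 0))
  simp only [hp0] at l1 l2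
  refine le_of_tendsto_of_tendsto l1 l2 ?_
  have hI : ∀ d ∈ Ioo (0:ℝ) 1, ∀ z ∈ Icc a b, p z d ∈ Ioo a b := by
    intro d hd z hz
    obtain ⟨h1, h2⟩ := hd
    obtain ⟨h3, h4⟩ := hz
    constructor <;> simp only [p] <;> nlinarith
  filter_upwards [Ioo_mem_nhdsGT (zero_lt_one' ℝ)] with d hd
  exact conc_open hv H (hI d hd x hx) (hI d hd y hy) ht

lemma conc_to_dist {a b : ℝ} {v : ℝ → ℝ} (hv : Continuous v)
    (H : ∀ x ∈ Icc a b, ∀ y ∈ Icc a b, ∀ t ∈ Icc (0:ℝ) 1,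
      (1 - t) * v x + t * v y ≤ v (x + t * (y - x)))
    {φ : ℝ → ℝ} (hφ : ContDiff ℝ (⊤ : ℕ∞) φ) (hc : HasCompactSupport φ)
    (hs : tsupport φ ⊆ Ioo a b) (h0 : ∀ x, 0 ≤ φ x) :
    (∫ x in a..b, deriv (deriv φ) x * v x) ≤ 0 := by
  rw [intervalIntegral.integral_eq_integral_of_support_subset
    (fun s hs' => Ioo_subset_Ioc_self (hs (support_deriv2 _ (left_ne_zero_of_mul hs'))))]
  have hg : Continuous fun s => v (-s) := by fun_prop
  obtain ⟨d1, d2⟩ := conv_derivs hφ hc hg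
  set W := convolution φ (fun s => v (-s)) (ContinuousLinearMap.lsmul ℝ ℝ) volume with hW
  set W1 := convolution (deriv φ) (fun s => v (-s)) (ContinuousLinearMap.lsmul ℝ ℝ) volume
  set W2 := convolution (deriv (deriv φ)) (fun s => v (-s)) (ContinuousLinearMap.lsmul ℝ ℝ) volume
    with hW2
  have hW20 : W2 0 = ∫ x, deriv (deriv φ) x * v x := by
    simp [hW2, convolution_def]
  have hWh : ∀ h, W h = ∫ x, φ x * v (x - h) := by
    intro h; simp [hW, convolution_def]
  rw [← hW20]
  by_contra! hpos
  let K : ℝ → ℝ := fun h => W h + W (-h)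
  have dK : ∀ h, HasDerivAt K (W1 h - W1 (-h)) h := by
    intro h
    have := (d1 h).add ((d1 (-h)).comp h (hasDerivAt_neg h))
    exact HasDerivAt.congr_deriv (this) (by (try simp only [id]); ring)
  have dK' : HasDerivAt (fun h => W1 h - W1 (-h)) (W2 0 + W2 0) 0 := by
    have := (d2 0).sub (HasDerivAt.comp (0:ℝ) (by simpa using d2 (-0)) (hasDerivAt_neg (0:ℝ)))
    exact HasDerivAt.congr_deriv (this) (by (try simp only [id]); ring)
  have eK : deriv K = fun h => W1 h - W1 (-h) := funext fun h => (dK h).deriv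
  have hmin : IsLocalMin K 0 := by
    apply isLocalMin_of_deriv_deriv_pos
    · rw [eK, dK'.deriv]; linarith
    · rw [eK]; simp
    · exact (dK 0).continuousAt
  have hint : ∀ h, Integrable fun x => φ x * v (x - h) := fun h =>
    Continuous.integrable_of_hasCompactSupport
      (hφ.continuous.mul (hv.comp (continuous_id.sub continuous_const))) hc.mul_right
  have hmax : ∀ᶠ h in 𝓝 (0:ℝ), K h ≤ K 0 := by
    obtain ⟨δ, hδ, hsub⟩ := IsCompact.exists_thickening_subset_open hc isOpen_Ioo hs
    filter_upwards [Metric.ball_mem_nhds (0:ℝ) hδ] with h hh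
    rw [Metric.mem_ball, Real.dist_eq, sub_zero] at hh
    simp only [K, neg_zero]
    rw [hWh, hWh, hWh, ← integral_add (hint _) (hint _), ← integral_add (hint _) (hint _)]
    refine integral_mono ((hint _).add (hint _)) ((hint _).add (hint _)) fun x => ?_
    by_cases hx : x ∈ tsupport φ
    · have m1 : x - h ∈ Icc a b := Ioo_subset_Icc_self (hsub (Metric.mem_thickening_iff.2
        ⟨x, hx, by simpa [Real.dist_eq] using hh⟩))
      have m2 : x + h ∈ Icc a b := Ioo_subset_Icc_self (hsub (Metric.mem_thickening_iff.2
        ⟨x, hx, by simpa [Real.dist_eq] using hh⟩))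
      have := H _ m1 _ m2 (1/2) (by norm_num)
      rw [show x - h + 1 / 2 * (x + h - (x - h)) = x by ring] at this
      have := mul_le_mul_of_nonneg_left this (h0 x)
      simp only [sub_zero, sub_neg_eq_add]
      linarith
    · simp [image_eq_zero_of_notMem_tsupport hx]
  have hconst : K =ᶠ[𝓝 0] fun _ => K 0 := by
    filter_upwards [hmin, hmax] with h h1 h2 using le_antisymm h2 h1
  have e := hconst.deriv.deriv_eq
  rw [eK, dK'.deriv] at e
  simp at e
  linarith

lemma green_aux {G G1 G2 : ℝ → ℝ} (h1 : ∀ r, HasDerivAt G (G1 r) r)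
    (h2 : ∀ r, HasDerivAt G1 (G2 r) r) (hc : Continuous G2) {t : ℝ} (ht : t ∈ Icc (0:ℝ) 1) :
    ∫ r in (0:ℝ)..1, (min r t * (1 - max r t)) * G2 r = (1 - t) * G 0 + t * G 1 - G t := by
  have hi : ∀ p q : ℝ, IntervalIntegrable (fun r => (min r t * (1 - max r t)) * G2 r) volume p q :=
    fun p q => Continuous.intervalIntegrable (by fun_prop) _ _
  rw [← intervalIntegral.integral_add_adjacent_intervals (hi 0 t) (hi t 1)]
  have i1 : ∫ r in (0:ℝ)..t, (min r t * (1 - max r t)) * G2 r =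
      ∫ r in (0:ℝ)..t, (1 - t) * (r * G2 r) := by
    apply intervalIntegral.integral_congr
    intro r hr
    rw [uIcc_of_le ht.1] at hr
    simp only [min_eq_left hr.2, max_eq_right hr.2]; ring
  have i2 : ∫ r in t..1, (min r t * (1 - max r t)) * G2 r =
      ∫ r in t..1, t * ((1 - r) * G2 r) := by
    apply intervalIntegral.integral_congr
    intro r hr
    rw [uIcc_of_le ht.2] at hr
    simp only [min_eq_right hr.1, max_eq_left hr.1]; ring
  rw [i1, i2, intervalIntegral.integral_const_mul, intervalIntegral.integral_const_mul]
  have j1 : ∫ r in (0:ℝ)..t, (r * G2 r) = (t * G1 t - G t) - (0 * G1 0 - G 0) := by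
    refine intervalIntegral.integral_eq_sub_of_hasDerivAt (f := fun r => r * G1 r - G r)
      (fun r _ => ?_) (Continuous.intervalIntegrable (by fun_prop) _ _)
    exact HasDerivAt.congr_deriv (((hasDerivAt_id r).mul (h2 r)).sub (h1 r)) (by (try simp only [id]); ring)
  have j2 : ∫ r in t..1, ((1 - r) * G2 r) = ((1 - 1) * G1 1 + G 1) - ((1 - t) * G1 t + G t) := by
    refine intervalIntegral.integral_eq_sub_of_hasDerivAt (f := fun r => (1 - r) * G1 r + G r)
      (fun r _ => ?_) (Continuous.intervalIntegrable (by fun_prop) _ _)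
    exact HasDerivAt.congr_deriv ((((hasDerivAt_id r).const_sub 1).mul (h2 r)).add (h1 r)) (by (try simp only [id]); ring)
  rw [j1, j2]; ring

lemma green {F F1 f : ℝ → ℝ} (h1 : ∀ r, HasDerivAt F (F1 r) r)
    (h2 : ∀ r, HasDerivAt F1 (f r) r) (hc : Continuous f) {t : ℝ} (ht : t ∈ Icc (0:ℝ) 1)
    (x y : ℝ) :
    ∫ r in (0:ℝ)..1, (min r t * (1 - max r t)) * ((y - x) ^ 2 * f (x + r * (y - x))) =
      (1 - t) * F x + t * F y - F (x + t * (y - x)) := by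
  have dg : ∀ r, HasDerivAt (fun r => x + r * (y - x)) (y - x) r := fun r => by
    simpa using ((hasDerivAt_id r).mul_const (y - x)).const_add x
  have := green_aux (G := fun r => F (x + r * (y - x))) (G1 := fun r => (y - x) * F1 (x + r * (y - x)))
    (G2 := fun r => (y - x) ^ 2 * f (x + r * (y - x)))
    (fun r => by
      exact HasDerivAt.congr_deriv ((h1 _).comp r (dg r)) (by (try simp only [id]); ring))
    (fun r => by
      exact HasDerivAt.congr_deriv (((h2 _).comp r (dg r)).const_mul (y - x)) (by (try simp only [id]); ring)) (by fun_prop) ht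
  rw [this]; simp

lemma parts {F F1 f φ : ℝ → ℝ} {a b : ℝ} (h1 : ∀ r, HasDerivAt F (F1 r) r)
    (h2 : ∀ r, HasDerivAt F1 (f r) r) (hc : Continuous f) (hφ : ContDiff ℝ (⊤ : ℕ∞) φ)
    (hs : tsupport φ ⊆ Ioo a b) :
    ∫ x in a..b, deriv (deriv φ) x * F x = ∫ x in a..b, φ x * f x := by
  have hφ1 : ContDiff ℝ (⊤ : ℕ∞) (deriv φ) := ContDiff.iterate_deriv 1 hφ
  have hφ2 : ContDiff ℝ (⊤ : ℕ∞) (deriv (deriv φ)) := ContDiff.iterate_deriv 2 hφ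
  have c0 := hφ.continuous
  have c2 := hφ2.continuous
  have cF : Continuous F := continuous_iff_continuousAt.2 fun x => (h1 x).continuousAt
  rw [← sub_eq_zero, ← intervalIntegral.integral_sub
    (Continuous.intervalIntegrable (by fun_prop) _ _)
    (Continuous.intervalIntegrable (by fun_prop) _ _)]
  rw [intervalIntegral.integral_eq_sub_of_hasDerivAt (f := fun x => deriv φ x * F x - φ x * F1 x)
    (fun x _ => ?_) (Continuous.intervalIntegrable (by fun_prop) _ _)]
  · have z : ∀ x, x ∉ Ioo a b → φ x = 0 ∧ deriv φ x = 0 := fun x hx =>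
      ⟨image_eq_zero_of_notMem_tsupport fun h => hx (hs h), by
        by_contra h; exact hx (hs (support_deriv_subset h))⟩
    have za := z a (by simp)
    have zb := z b (by simp)
    simp [za.1, za.2, zb.1, zb.2]
  · have e1 := (hφ.differentiable (by simp) x).hasDerivAt
    have e2 := (hφ1.differentiable (by simp) x).hasDerivAt
    exact HasDerivAt.congr_deriv ((e2.mul (h1 x)).sub (e1.mul (h2 x))) (by (try simp only [id]); ring)

end DistGreen



/-- Equivalence of the distributional inequality `u'' + κu ≤ 0` and the Green-function
integral inequality along constant speed geodesics of `[a,b]`. -/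
theorem distributional_iff_green (a b : ℝ) (hab : a < b)
    (κ u : ℝ → ℝ) (hκ : ContinuousOn κ (Icc a b))
    (hu : ContinuousOn u (Icc a b)) (hunn : ∀ x ∈ Icc a b, 0 ≤ u x) :
    (∀ φ : ℝ → ℝ, ContDiff ℝ (⊤ : ℕ∞) φ → HasCompactSupport φ → tsupport φ ⊆ Ioo a b →
        (∀ x, 0 ≤ φ x) →
        (∫ x in a..b, deriv (deriv φ) x * u x) ≤ -∫ x in a..b, φ x * κ x * u x) ↔
      (∀ x ∈ Icc a b, ∀ y ∈ Icc a b, ∀ t ∈ Icc (0:ℝ) 1,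
        (1 - t) * u x + t * u y +
            (∫ r in (0:ℝ)..1,
              (min r t * (1 - max r t)) * κ (x + r * (y - x)) * (y - x) ^ 2 *
                u (x + r * (y - x))) ≤
          u (x + t * (y - x))) := by
  classical
  let f : ℝ → ℝ := IccExtend hab.le (domRestrict (Icc a b) fun x => κ x * u x)
  let U : ℝ → ℝ := IccExtend hab.le (domRestrict (Icc a b) u)
  have hf : Continuous f := (continuousOn_iff_continuous_domRestrict.1 (hκ.mul hu)).Icc_extend'
  have hU : Continuous U := (continuousOn_iff_continuous_domRestrict.1 hu).Icc_extend'
  have fe : ∀ x ∈ Icc a b, f x = κ x * u x := fun x hx => IccExtend_of_mem _ _ hx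
  have Ue : ∀ x ∈ Icc a b, U x = u x := fun x hx => IccExtend_of_mem _ _ hx
  let F1 : ℝ → ℝ := fun x => ∫ s in a..x, f s
  have h2 : ∀ x, HasDerivAt F1 (f x) x := fun x => (hf.integral_hasStrictDerivAt a x).hasDerivAt
  have cF1 : Continuous F1 := continuous_iff_continuousAt.2 fun x => (h2 x).continuousAt
  let F : ℝ → ℝ := fun x => ∫ s in a..x, F1 s
  have h1 : ∀ x, HasDerivAt F (F1 x) x := fun x => (cF1.integral_hasStrictDerivAt a x).hasDerivAt
  have cF : Continuous F := continuous_iff_continuousAt.2 fun x => (h1 x).continuousAt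
  let v : ℝ → ℝ := fun x => U x + F x
  have hv : Continuous v := hU.add cF
  have mem : ∀ x ∈ Icc a b, ∀ y ∈ Icc a b, ∀ t ∈ Icc (0:ℝ) 1, x + t * (y - x) ∈ Icc a b := by
    intro x hx y hy t ht
    obtain ⟨h3, h4⟩ := hx
    obtain ⟨h5, h6⟩ := hy
    obtain ⟨h7, h8⟩ := ht
    constructor <;> nlinarith
  have A : ∀ φ : ℝ → ℝ, ContDiff ℝ (⊤ : ℕ∞) φ → tsupport φ ⊆ Ioo a b →
      ((∫ x in a..b, deriv (deriv φ) x * u x) ≤ -∫ x in a..b, φ x * κ x * u x) =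
      ((∫ x in a..b, deriv (deriv φ) x * v x) ≤ 0) := by
    intro φ hφ hs
    have c2 : Continuous (deriv (deriv φ)) :=
      (show ContDiff ℝ (⊤ : ℕ∞) (deriv (deriv φ)) from ContDiff.iterate_deriv 2 hφ).continuous
    have e1 : ∫ x in a..b, deriv (deriv φ) x * u x = ∫ x in a..b, deriv (deriv φ) x * U x := by
      apply intervalIntegral.integral_congr
      intro x hx
      rw [uIcc_of_le hab.le] at hx
      simp only [Ue x hx]
    have e2 : ∫ x in a..b, φ x * κ x * u x = ∫ x in a..b, φ x * f x := by
      apply intervalIntegral.integral_congr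
      intro x hx
      rw [uIcc_of_le hab.le] at hx
      simp only [fe x hx]; ring
    have e3 : ∫ x in a..b, deriv (deriv φ) x * v x =
        (∫ x in a..b, deriv (deriv φ) x * U x) + ∫ x in a..b, φ x * f x := by
      rw [← DistGreen.parts h1 h2 hf hφ hs, ← intervalIntegral.integral_add
        (Continuous.intervalIntegrable (by fun_prop) _ _)
        (Continuous.intervalIntegrable (by fun_prop) _ _)]
      simp only [v, mul_add]
    rw [e1, e2, e3, le_neg_iff_add_nonpos_right]
  have B : ∀ x ∈ Icc a b, ∀ y ∈ Icc a b, ∀ t ∈ Icc (0:ℝ) 1,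
      ((1 - t) * u x + t * u y +
            (∫ r in (0:ℝ)..1,
              (min r t * (1 - max r t)) * κ (x + r * (y - x)) * (y - x) ^ 2 *
                u (x + r * (y - x))) ≤
          u (x + t * (y - x))) ↔ ((1 - t) * v x + t * v y ≤ v (x + t * (y - x))) := by
    intro x hx y hy t ht
    have e : (∫ r in (0:ℝ)..1, (min r t * (1 - max r t)) * κ (x + r * (y - x)) * (y - x) ^ 2 *
                u (x + r * (y - x))) =
        ∫ r in (0:ℝ)..1, (min r t * (1 - max r t)) * ((y - x) ^ 2 * f (x + r * (y - x))) := by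
      apply intervalIntegral.integral_congr
      intro r hr
      rw [uIcc_of_le zero_le_one] at hr
      simp only [fe _ (mem x hx y hy r hr)]; ring
    rw [e, DistGreen.green h1 h2 hf ht]
    simp only [v, Ue x hx, Ue y hy, Ue _ (mem x hx y hy t ht)]
    constructor <;> intro h <;> linarith
  constructor
  · intro H x hx y hy t ht
    rw [B x hx y hy t ht]
    exact DistGreen.conc_closed hab hv
      (fun φ p1 p2 p3 p4 => (A φ p1 p3).mp (H φ p1 p2 p3 p4)) hx hy ht
  · intro H φ p1 p2 p3 p4
    rw [A φ p1 p3]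
    exact DistGreen.conc_to_dist hv
      (fun x hx y hy t ht => (B x hx y hy t ht).1 (H x hx y hy t ht)) p1 p2 p3 p4
end

section
/- Let κ : [a,b] → ℝ be continuous and u : [a,b] → [0,∞) continuous. If u satisfies u'' + κu ≤ 0 in the distributional sense, then for every constant speed geodesic γ : [0,1] → [a,b] with length θ, u(γ(t)) ≥ σ_{κ⁻_γ}^{(1-t)}(θ) u(γ(0)) + σ_{κ⁺_γ}^{(t)}(θ) u(γ(1)) for all t ∈ [0,1], where κ⁺_γ(s) = κ(γ̄(s)), κ⁻_γ(s) = κ(γ̄(θ-s)) and γ̄ is the unit-speed reparametrization of γ, with the convention ∞·0 = 0. -/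
open Set

/-- `s` is the generalized sin-function for curvature `κ` on `[0, L]`. -/
def IsSinSolution (κ s s' : ℝ → ℝ) (L : ℝ) : Prop :=
  s 0 = 0 ∧ s' 0 = 1 ∧
    ∀ x ∈ Set.Icc (0:ℝ) L, HasDerivAt s (s' x) x ∧ HasDerivAt s' (-(κ x * s x)) x

lemma anti_of_deriv {h h' : ℝ → ℝ} {α β : ℝ} (hαβ : α ≤ β)
    (hd : ∀ r ∈ Icc α β, HasDerivAt h (h' r) r) (hn : ∀ r ∈ Icc α β, h' r ≤ 0) :
    h β ≤ h α := by
  have : AntitoneOn h (Icc α β) := by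
    apply antitoneOn_of_hasDerivWithinAt_nonpos (f' := h') (convex_Icc α β)
    · exact fun r hr => (hd r hr).continuousAt.continuousWithinAt
    · exact fun r hr => (hd r (interior_subset hr)).hasDerivWithinAt
    · exact fun r hr => hn r (interior_subset hr)
  exact this (left_mem_Icc.2 hαβ) (right_mem_Icc.2 hαβ) hαβ

lemma wronskian_le {k v v' v'' s s' : ℝ → ℝ} {α β δ C : ℝ} (hαβ : α ≤ β) (hδ : 0 ≤ δ)
    (hv : ∀ r ∈ Icc α β, HasDerivAt v (v' r) r)
    (hv' : ∀ r ∈ Icc α β, HasDerivAt v' (v'' r) r)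
    (hs : ∀ r ∈ Icc α β, HasDerivAt s (s' r) r)
    (hs' : ∀ r ∈ Icc α β, HasDerivAt s' (-(k r * s r)) r)
    (hs0 : ∀ r ∈ Icc α β, 0 ≤ s r) (hsC : ∀ r ∈ Icc α β, s r ≤ C)
    (hle : ∀ r ∈ Icc α β, v'' r + k r * v r ≤ δ) :
    v' β * s β - v β * s' β ≤ v' α * s α - v α * s' α + δ * C * (β - α) := by
  have := anti_of_deriv (h := fun r => v' r * s r - v r * s' r - δ * C * r)
    (h' := fun r => s r * (v'' r + k r * v r) - δ * C) hαβ ?_ ?_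
  · linarith
  · intro r hr
    have := (((hv' r hr).mul (hs r hr)).sub ((hv r hr).mul (hs' r hr))).sub
      ((hasDerivAt_id r).const_mul (δ * C))
    refine HasDerivAt.congr_deriv this ?_
    ring
  · intro r hr
    have h1 := mul_le_mul_of_nonneg_left (hle r hr) (hs0 r hr)
    have h2 := mul_le_mul_of_nonneg_left (hsC r hr) hδ
    linarith

/-- approximability by smooth almost-supersolutions -/
def Approx (k U : ℝ → ℝ) (θ : ℝ) : Prop :=
  ∀ δ > 0, ∃ v v' v'' : ℝ → ℝ, (∀ r ∈ Icc 0 θ, HasDerivAt v (v' r) r) ∧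
    (∀ r ∈ Icc 0 θ, HasDerivAt v' (v'' r) r) ∧ (∀ r ∈ Icc 0 θ, |v r - U r| ≤ δ) ∧
    (∀ r ∈ Icc 0 θ, v'' r + k r * v r ≤ δ)

lemma Approx.reverse {k U : ℝ → ℝ} {θ : ℝ} (h : Approx k U θ) :
    Approx (fun r => k (θ - r)) (fun r => U (θ - r)) θ := by
  intro δ hδ
  obtain ⟨v, v', v'', h1, h2, h3, h4⟩ := h δ hδ
  have hm : ∀ r ∈ Icc 0 θ, θ - r ∈ Icc 0 θ := fun r hr => ⟨by linarith [hr.2], by linarith [hr.1]⟩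
  refine ⟨fun r => v (θ - r), fun r => - v' (θ - r), fun r => v'' (θ - r), ?_, ?_,
    fun r hr => h3 _ (hm r hr), fun r hr => h4 _ (hm r hr)⟩
  · intro r hr
    exact (h1 _ (hm r hr)).comp_const_sub θ r
  · intro r hr
    exact HasDerivAt.congr_deriv ((h2 _ (hm r hr)).comp_const_sub θ r).neg (neg_neg _)

/-- wronskian of two solutions -/
lemma wronskian_const {k s s' q q' : ℝ → ℝ} {θ : ℝ}
    (hs : ∀ r ∈ Icc 0 θ, HasDerivAt s (s' r) r)
    (hs' : ∀ r ∈ Icc 0 θ, HasDerivAt s' (-(k r * s r)) r)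
    (hq : ∀ r ∈ Icc 0 θ, HasDerivAt q (q' r) r)
    (hq' : ∀ r ∈ Icc 0 θ, HasDerivAt q' (-(k r * q r)) r) :
    ∀ r ∈ Icc 0 θ, s' r * q r - s r * q' r = s' 0 * q 0 - s 0 * q' 0 := by
  intro r hr
  have hd : ∀ x ∈ Icc 0 r, HasDerivAt (fun r => s' r * q r - s r * q' r) 0 x := by
    intro x hx
    have hx' : x ∈ Icc 0 θ := ⟨hx.1, hx.2.trans hr.2⟩
    refine HasDerivAt.congr_deriv (((hs' x hx').mul (hq x hx')).sub ((hs x hx').mul (hq' x hx'))) ?_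
    ring
  have h1 := anti_of_deriv hr.1 hd (by simp)
  have h2 := anti_of_deriv hr.1 (fun x hx => (hd x hx).neg) (by simp)
  simp only [Pi.neg_apply] at h1 h2
  linarith

/-- no double zero -/
lemma no_double {k s s' : ℝ → ℝ} {θ K : ℝ} (hK : ∀ r ∈ Icc 0 θ, |k r| ≤ K)
    (hsol : IsSinSolution k s s' θ) : ∀ r ∈ Icc 0 θ, s r = 0 → s' r ≠ 0 := by
  obtain ⟨h0, h0', hd⟩ := hsol
  intro r hr e1 e2
  have := anti_of_deriv (h := fun r => -((s r ^ 2 + s' r ^ 2) * Real.exp ((1 + K) * r)))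
    (h' := fun r => -((2 * s r * s' r + 2 * s' r * (-(k r * s r))) * Real.exp ((1 + K) * r) +
      (s r ^ 2 + s' r ^ 2) * (Real.exp ((1 + K) * r) * (1 + K)))) hr.1 ?_ ?_
  · simp [h0, h0', e1, e2] at this
    linarith
  · intro x hx
    have hx' : x ∈ Icc 0 θ := ⟨hx.1, hx.2.trans hr.2⟩
    obtain ⟨d1, d2⟩ := hd x hx'
    have d3 : HasDerivAt (fun r => Real.exp ((1 + K) * r)) (Real.exp ((1 + K) * x) * (1 + K)) x := by
      have := ((hasDerivAt_id x).const_mul (1 + K)).exp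
      simpa using this
    refine HasDerivAt.congr_deriv (((d1.pow 2).add (d2.pow 2)).mul d3).neg ?_
    simp
  · intro x hx
    have hx' : x ∈ Icc 0 θ := ⟨hx.1, hx.2.trans hr.2⟩
    have hk := abs_le.1 (hK x hx')
    have he := Real.exp_pos ((1 + K) * x)
    have : 0 ≤ 2 * s x * s' x + 2 * s' x * (-(k x * s x)) + (s x ^ 2 + s' x ^ 2) * (1 + K) := by
      nlinarith [sq_nonneg (s x + s' x), sq_nonneg (s x - s' x),
        mul_nonneg (by linarith [hk.1] : 0 ≤ K + k x) (sq_nonneg (s x - s' x)),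
        mul_nonneg (by linarith [hk.2] : 0 ≤ K - k x) (sq_nonneg (s x + s' x))]
    have := mul_nonneg this he.le
    linarith

/-- first zero -/
lemma first_zero {k s s' : ℝ → ℝ} {θ : ℝ} 
    (hsol : IsSinSolution k s s' θ) (hn : ¬ ∀ r ∈ Ioc (0:ℝ) θ, 0 < s r) :
    ∃ r ∈ Ioc 0 θ, s r = 0 ∧ s' r ≤ 0 ∧ ∀ x ∈ Icc 0 r, 0 ≤ s x := by
  obtain ⟨h0, h0', hd⟩ := hsol
  push Not at hn
  obtain ⟨r1, hr1, hs1⟩ := hn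
  have hθ : 0 ≤ θ := hr1.1.le.trans hr1.2
  -- positivity near zero
  have hpos : ∀ᶠ x in nhdsWithin 0 (Ioi 0), 0 < s x := by
    have h := (hd 0 ⟨le_rfl, hθ⟩).1
    rw [h0'] at h
    have h2 := hasDerivWithinAt_iff_tendsto_slope.1 (h.hasDerivWithinAt (s := Ioi 0))
    have h3 := h2.eventually (lt_mem_nhds (show (1/2:ℝ) < 1 by norm_num))
    have : Ioi (0:ℝ) \ {0} = Ioi 0 := by ext; simp
    rw [this] at h3
    filter_upwards [h3, self_mem_nhdsWithin] with x hx hx0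
    rw [slope_def_field, h0] at hx
    have hx0 : 0 < x := hx0
    simp at hx
    by_contra hc
    have : s x / x ≤ 0 := div_nonpos_of_nonpos_of_nonneg (not_lt.1 hc) hx0.le
    norm_num at hx
    linarith
  obtain ⟨η, hη, hηs⟩ := (mem_nhdsGT_iff_exists_Ioo_subset).1 hpos
  have hη : 0 < η := hη
  have hηr : η ≤ r1 := by
    by_contra hc
    have : 0 < s r1 := hηs ⟨hr1.1, not_le.1 hc⟩
    linarith
  have hcont : ContinuousOn s (Icc (η/2) r1) := fun x hx =>
    (hd x ⟨by linarith [hx.1], hx.2.trans hr1.2⟩).1.continuousAt.continuousWithinAt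
  let S := Icc (η/2) r1 ∩ s ⁻¹' Iic 0
  have hSc : IsCompact S := by
    exact isCompact_Icc.of_isClosed_subset
      (hcont.preimage_isClosed_of_isClosed isClosed_Icc isClosed_Iic) inter_subset_left
  have hSne : S.Nonempty := ⟨r1, ⟨by linarith, le_rfl⟩, hs1⟩
  obtain ⟨r, hrS, hrmin⟩ := hSc.exists_isLeast hSne
  have hr0 : 0 < r := by linarith [hrS.1.1]
  have hrθ : r ≤ θ := hrS.1.2.trans hr1.2
  have hlt : ∀ x ∈ Ioo 0 r, 0 < s x := by
    intro x hx
    by_cases hxη : x < η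
    · exact hηs ⟨hx.1, hxη⟩
    · by_contra hc
      have : r ≤ x := hrmin ⟨⟨by linarith, by linarith [hx.2, hrS.1.2]⟩, not_lt.1 hc⟩
      linarith [hx.2]
  have hder := (hd r ⟨hr0.le, hrθ⟩).1
  have hnb : nhdsWithin r (Ioo 0 r) = nhdsWithin r (Iio r) := nhdsWithin_Ioo_eq_nhdsLT hr0
  have hs0 : s r = 0 := by
    refine le_antisymm hrS.2 ?_
    have ht : Filter.Tendsto s (nhdsWithin r (Ioo 0 r)) (nhds (s r)) :=
      hder.continuousAt.continuousWithinAt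
    rw [hnb] at ht
    refine ge_of_tendsto ht ?_
    rw [← hnb]
    filter_upwards [self_mem_nhdsWithin] with x hx using (hlt x hx).le
  refine ⟨r, ⟨hr0, hrθ⟩, hs0, ?_, ?_⟩
  · have h2 := hasDerivWithinAt_iff_tendsto_slope.1 (hder.hasDerivWithinAt (s := Iio r))
    have : Iio r \ {r} = Iio r := by ext; simp
    rw [this] at h2
    refine le_of_tendsto h2 ?_
    rw [← hnb]
    filter_upwards [self_mem_nhdsWithin] with x hx
    rw [slope_def_field, hs0]
    exact div_nonpos_of_nonneg_of_nonpos (by simpa using (hlt x hx).le) (by linarith [hx.2])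
  · intro x hx
    rcases hx.1.eq_or_lt with h | h
    · rw [← h, h0]
    rcases hx.2.eq_or_lt with h' | h'
    · rw [h', hs0]
    exact (hlt x ⟨h, h'⟩).le

lemma rev_sol {k m m' : ℝ → ℝ} {θ : ℝ}
    (hm : IsSinSolution (fun r => k (θ - r)) m m' θ) :
    (∀ r ∈ Icc 0 θ, HasDerivAt (fun r => m (θ - r)) (- m' (θ - r)) r) ∧
    (∀ r ∈ Icc 0 θ, HasDerivAt (fun r => - m' (θ - r)) (-(k r * m (θ - r))) r) := by
  have hmem : ∀ r ∈ Icc 0 θ, θ - r ∈ Icc 0 θ :=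
    fun r hr => ⟨by linarith [hr.2], by linarith [hr.1]⟩
  refine ⟨fun r hr => (hm.2.2 _ (hmem r hr)).1.comp_const_sub θ r, fun r hr => ?_⟩
  refine HasDerivAt.congr_deriv ((hm.2.2 _ (hmem r hr)).2.comp_const_sub θ r).neg ?_
  simp

lemma wronskian_sm {k s s' m m' : ℝ → ℝ} {θ : ℝ}
    (hs : IsSinSolution k s s' θ) (hm : IsSinSolution (fun r => k (θ - r)) m m' θ) :
    ∀ r ∈ Icc 0 θ, s' r * m (θ - r) + s r * m' (θ - r) = m θ := by
  intro r hr
  have := wronskian_const (fun r hr => (hs.2.2 r hr).1) (fun r hr => (hs.2.2 r hr).2)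
    (rev_sol hm).1 (rev_sol hm).2 r hr
  simp [hs.1, hs.2.1] at this
  linarith

lemma pos_of_pos {k s s' m m' : ℝ → ℝ} {θ : ℝ} (hθ : 0 < θ)
    (hs : IsSinSolution k s s' θ) (hm : IsSinSolution (fun r => k (θ - r)) m m' θ)
    (hpos : ∀ r ∈ Ioc (0:ℝ) θ, 0 < m r) : ∀ r ∈ Ioc (0:ℝ) θ, 0 < s r := by
  by_contra hc
  obtain ⟨r, hr, h1, h2, -⟩ := first_zero hs hc
  have hw := wronskian_sm hs hm r ⟨hr.1.le, hr.2⟩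
  rw [h1] at hw
  have h3 := hpos θ ⟨hθ, le_rfl⟩
  have h4 : 0 ≤ m (θ - r) := by
    rcases hr.2.eq_or_lt with h | h
    · rw [h, sub_self, hm.1]
    · exact (hpos _ ⟨by linarith, by linarith [hr.1]⟩).le
  nlinarith

lemma exists_bound {s s' : ℝ → ℝ} {θ : ℝ} (hs : ∀ r ∈ Icc 0 θ, HasDerivAt s (s' r) r) :
    ∃ C, 0 ≤ C ∧ ∀ r ∈ Icc 0 θ, |s r| ≤ C := by
  obtain ⟨C, hC⟩ := isCompact_Icc.exists_bound_of_continuousOn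
    (f := s) (s := Icc 0 θ) (fun r hr => (hs r hr).continuousAt.continuousWithinAt)
  exact ⟨max C 0, le_max_right _ _, fun r hr => (hC r hr).trans (le_max_left _ _)⟩

/-- limit argument -/
lemma le_of_eps {A B : ℝ} (c : ℝ) (h : ∀ δ > 0, A ≤ B + c * δ) : A ≤ B := by
  have ht : Filter.Tendsto (fun δ : ℝ => B + c * δ) (nhdsWithin 0 (Ioi 0)) (nhds B) := by
    have : Continuous (fun δ : ℝ => B + c * δ) := by fun_prop
    have h := this.tendsto 0
    simp only [mul_zero, add_zero] at h
    exact h.mono_left nhdsWithin_le_nhds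
  exact ge_of_tendsto ht (by filter_upwards [self_mem_nhdsWithin] with δ hδ using h δ hδ)

/-- Main comparison -/
lemma comparison {k U s s' m m' : ℝ → ℝ} {θ : ℝ} (hθ : 0 < θ) (hA : Approx k U θ)
    (hs : IsSinSolution k s s' θ) (hm : IsSinSolution (fun r => k (θ - r)) m m' θ)
    (hsp : ∀ r ∈ Ioc (0:ℝ) θ, 0 < s r) (hmp : ∀ r ∈ Ioc (0:ℝ) θ, 0 < m r)
    {z : ℝ} (hz : z ∈ Icc 0 θ) :
    m (θ - z) * U 0 + s z * U θ ≤ U z * m θ := by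
  obtain ⟨C, hC0, hC⟩ := exists_bound (fun r hr => (hs.2.2 r hr).1)
  obtain ⟨D, hD0, hD⟩ := exists_bound (fun r hr => (hm.2.2 r hr).1)
  have hmem : ∀ r ∈ Icc 0 θ, θ - r ∈ Icc 0 θ :=
    fun r hr => ⟨by linarith [hr.2], by linarith [hr.1]⟩
  have hsn : ∀ r ∈ Icc 0 θ, 0 ≤ s r := by
    intro r hr
    rcases hr.1.eq_or_lt with h | h
    · rw [← h, hs.1]
    · exact (hsp r ⟨h, hr.2⟩).le
  have hmn : ∀ r ∈ Icc 0 θ, 0 ≤ m r := by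
    intro r hr
    rcases hr.1.eq_or_lt with h | h
    · rw [← h, hm.1]
    · exact (hmp r ⟨h, hr.2⟩).le
  have hw := wronskian_sm hs hm z hz
  have i1 : ∀ r ∈ Icc 0 z, r ∈ Icc 0 θ := fun r hr => ⟨hr.1, hr.2.trans hz.2⟩
  have i2 : ∀ r ∈ Icc z θ, r ∈ Icc 0 θ := fun r hr => ⟨hz.1.trans hr.1, hr.2⟩
  apply le_of_eps (m (θ - z) * (C * z) + s z * (D * (θ - z)) + m (θ - z) + s z + m θ)
  intro δ hδ
  obtain ⟨v, v', v'', h1, h2, h3, h4⟩ := hA δ hδ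
  have w1 := wronskian_le hz.1 hδ.le (fun r hr => h1 r (i1 r hr)) (fun r hr => h2 r (i1 r hr))
    (fun r hr => (hs.2.2 r (i1 r hr)).1) (fun r hr => (hs.2.2 r (i1 r hr)).2)
    (fun r hr => hsn r (i1 r hr)) (fun r hr => (abs_le.1 (hC r (i1 r hr))).2)
    (fun r hr => h4 r (i1 r hr))
  have w2 := wronskian_le hz.2 hδ.le (fun r hr => h1 r (i2 r hr)) (fun r hr => h2 r (i2 r hr))
    (fun r hr => (rev_sol hm).1 r (i2 r hr)) (fun r hr => (rev_sol hm).2 r (i2 r hr))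
    (fun r hr => hmn _ (hmem r (i2 r hr))) (fun r hr => (abs_le.1 (hD _ (hmem r (i2 r hr)))).2)
    (fun r hr => h4 r (i2 r hr))
  simp only [hs.1, hs.2.1, hm.1, hm.2.1, sub_self, sub_zero] at w1 w2
  have a0 := abs_le.1 (h3 0 ⟨le_rfl, hθ.le⟩)
  have aθ := abs_le.1 (h3 θ ⟨hθ.le, le_rfl⟩)
  have az := abs_le.1 (h3 z hz)
  have hq := hmn _ (hmem z hz)
  have hsz := hsn z hz
  have hmθ := hmn θ ⟨hθ.le, le_rfl⟩
  have b1 := mul_le_mul_of_nonneg_left w1 hq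
  have b2 := mul_le_mul_of_nonneg_left w2 hsz
  have c0 := mul_le_mul_of_nonneg_left a0.1 hq
  have cθ := mul_le_mul_of_nonneg_left aθ.1 hsz
  have cz := mul_le_mul_of_nonneg_left az.2 hmθ
  have e : v z * m θ = v z * (s' z * m (θ - z) + s z * m' (θ - z)) := by rw [hw]
  nlinarith

lemma min_principle {f f' f'' : ℝ → ℝ} {θ k δ : ℝ} (hθ : 0 ≤ θ) (hk : 1 ≤ k) (hδ : 0 ≤ δ)
    (h1 : ∀ r ∈ Icc 0 θ, HasDerivAt f (f' r) r) (h2 : ∀ r ∈ Icc 0 θ, HasDerivAt f' (f'' r) r)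
    (h3 : ∀ r ∈ Icc 0 θ, f'' r ≤ k * f r + δ) (h0 : -δ ≤ f 0) (h0' : -δ ≤ f θ) :
    ∀ r ∈ Icc 0 θ, -δ ≤ f r := by
  obtain ⟨z, hz, hmin⟩ := isCompact_Icc.exists_isMinOn (nonempty_Icc.2 hθ)
    (fun r hr => (h1 r hr).continuousAt.continuousWithinAt : ContinuousOn f (Icc 0 θ))
  suffices hh : -δ ≤ f z from fun r hr => hh.trans (hmin hr)
  rcases hz.1.eq_or_lt with h | hz0
  · rwa [← h]
  rcases hz.2.eq_or_lt with h | hzθ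
  · rwa [h]
  by_contra! hc
  have hneg : f'' z < 0 := by
    have := h3 z hz
    have hfz : f z < -δ := hc
    nlinarith
  have hnb : Icc 0 θ ∈ nhds z := Icc_mem_nhds hz0 hzθ
  have hloc : IsLocalMin f z := hmin.isLocalMin hnb
  have hf'z : f' z = 0 := hloc.hasDerivAt_eq_zero (h1 z hz)
  have hde : deriv f =ᶠ[nhds z] f' := by
    filter_upwards [hnb] with x hx using (h1 x hx).deriv
  have hdd : deriv (deriv f) z = f'' z := by
    rw [hde.deriv_eq]; exact (h2 z hz).deriv
  have hmax : IsLocalMax f z := isLocalMax_of_deriv_deriv_neg (by rw [hdd]; exact hneg)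
    (by rw [(h1 z hz).deriv, hf'z]) (h1 z hz).continuousAt
  have hev : f =ᶠ[nhds z] fun _ => f z := by
    filter_upwards [hloc, hmax] with x a1 a2 using le_antisymm a2 a1
  have hd0 : deriv f =ᶠ[nhds z] fun _ => 0 := by
    filter_upwards [hev.eventuallyEq_nhds] with x hx
    rw [hx.deriv_eq]; simp
  have := hd0.deriv_eq
  rw [hdd] at this
  simp at this
  linarith

/-- Sturm + strong minimum principle -/
lemma vanish {k U s s' : ℝ → ℝ} {θ K : ℝ} (hA : Approx k U θ)
    (hU : ∀ r ∈ Icc 0 θ, 0 ≤ U r)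
    (hK : ∀ r ∈ Icc 0 θ, |k r| ≤ K)
    (hs : IsSinSolution k s s' θ) (hn : ¬ ∀ r ∈ Ioc (0:ℝ) θ, 0 < s r) : U θ = 0 := by
  obtain ⟨z, hz, hz0, hz1, hzn⟩ := first_zero hs hn
  have hzI : z ∈ Icc 0 θ := ⟨hz.1.le, hz.2⟩
  have hθ : 0 < θ := hz.1.trans_le hz.2
  have m0 : (0:ℝ) ∈ Icc 0 θ := ⟨le_rfl, hθ.le⟩
  have mθ : θ ∈ Icc 0 θ := ⟨hθ.le, le_rfl⟩
  have hK0 : 0 ≤ K := (abs_nonneg _).trans (hK 0 m0)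
  have hs'z : s' z < 0 := lt_of_le_of_ne hz1 (no_double hK hs z hzI hz0)
  obtain ⟨C, hC0, hC⟩ := exists_bound (fun r hr => (hs.2.2 r hr).1)
  have i1 : ∀ r ∈ Icc 0 z, r ∈ Icc 0 θ := fun r hr => ⟨hr.1, hr.2.trans hz.2⟩
  have hUz : U z ≤ 0 := by
    have : - U z * s' z ≤ - U 0 := by
      apply le_of_eps (C * z + 1 - s' z)
      intro δ hδ
      obtain ⟨v, v', v'', h1, h2, h3, h4⟩ := hA δ hδ
      have w1 := wronskian_le hz.1.le hδ.le (fun r hr => h1 r (i1 r hr))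
        (fun r hr => h2 r (i1 r hr))
        (fun r hr => (hs.2.2 r (i1 r hr)).1) (fun r hr => (hs.2.2 r (i1 r hr)).2)
        hzn (fun r hr => (abs_le.1 (hC r (i1 r hr))).2)
        (fun r hr => h4 r (i1 r hr))
      simp only [hs.1, hs.2.1, hz0, sub_zero] at w1
      have a0 := abs_le.1 (h3 0 m0)
      have az := abs_le.1 (h3 z hzI)
      nlinarith
    have := hU 0 m0
    by_contra hc
    nlinarith
  set L := K + 1 with hL
  set c := √L with hc
  have hLpos : 0 < L := by positivity
  have hcc : c * c = L := Real.mul_self_sqrt hLpos.le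
  have hcpos : 0 < c := Real.sqrt_pos.2 hLpos
  set B := U θ / Real.sinh (c * θ) with hB
  have hshθ : 0 < Real.sinh (c * θ) := Real.sinh_pos_iff.2 (by positivity)
  have hshz : 0 < Real.sinh (c * z) := Real.sinh_pos_iff.2 (mul_pos hcpos hz.1)
  have hlin : ∀ x : ℝ, HasDerivAt (fun r => c * r) c x := fun x => by
    simpa using (hasDerivAt_id x).const_mul c
  have key : B * Real.sinh (c * z) ≤ U z := by
    apply le_of_eps (2 + L + K)
    intro δ hδ
    obtain ⟨v, v', v'', h1, h2, h3, h4⟩ := hA δ hδ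
    have hmp := min_principle (f := fun r => v r - B * Real.sinh (c * r))
      (f' := fun r => v' r - B * (Real.cosh (c * r) * c))
      (f'' := fun r => v'' r - B * (Real.sinh (c * r) * c * c)) (k := L) (δ := (1 + L + K) * δ)
      hθ.le (by linarith) (by positivity) ?_ ?_ ?_ ?_ ?_ z hzI
    · have az := abs_le.1 (h3 z hzI)
      nlinarith
    · intro r hr
      exact (h1 r hr).sub ((hlin r).sinh.const_mul B)
    · intro r hr
      exact (h2 r hr).sub (((hlin r).cosh.mul_const c).const_mul B)
    · intro r hr
      have a := abs_le.1 (h3 r hr)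
      have b := abs_le.1 (hK r hr)
      have d := hU r hr
      have e := h4 r hr
      rw [mul_assoc _ c c, hcc]
      have e1 : -(k r * v r) ≤ K * U r + K * δ := by
        have x1 : -(k r * U r) ≤ K * U r := by nlinarith
        have x2 : -(k r * (v r - U r)) ≤ K * δ := by
          refine (neg_le_abs _).trans ?_
          rw [abs_mul]
          exact mul_le_mul (hK r hr) (h3 r hr) (abs_nonneg _) hK0
        linarith
      have e2 : L * U r ≤ L * (v r + δ) := mul_le_mul_of_nonneg_left (by linarith) hLpos.le
      have e3 : K * U r ≤ L * U r := mul_le_mul_of_nonneg_right (by linarith) d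
      linarith
    · have a := abs_le.1 (h3 0 m0)
      have := hU 0 m0
      simp
      nlinarith [mul_nonneg hLpos.le hδ.le, mul_nonneg hK0 hδ.le]
    · have a := abs_le.1 (h3 θ mθ)
      have : B * Real.sinh (c * θ) = U θ := div_mul_cancel₀ _ hshθ.ne'
      rw [this]
      nlinarith [mul_nonneg hLpos.le hδ.le, mul_nonneg hK0 hδ.le]
  have hB0 : B ≤ 0 := by
    by_contra hcon
    have := mul_pos (not_le.1 hcon) hshz
    linarith
  have : B * Real.sinh (c * θ) = U θ := div_mul_cancel₀ _ hshθ.ne'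
  have h5 := hU θ mθ
  nlinarith

lemma approx_main (a b : ℝ) (hab : a < b)
    (κ u : ℝ → ℝ) (hκ : ContinuousOn κ (Icc a b))
    (hu : ContinuousOn u (Icc a b)) 
    (hdist : ∀ φ : ℝ → ℝ, ContDiff ℝ (⊤ : ℕ∞) φ → HasCompactSupport φ → tsupport φ ⊆ Ioo a b →
        (∀ x, 0 ≤ φ x) →
        (∫ x in a..b, deriv (deriv φ) x * u x) ≤ -∫ x in a..b, φ x * κ x * u x)
    (δ : ℝ) (hδ : 0 < δ) : ∃ v v' v'' : ℝ → ℝ, (∀ r ∈ Icc a b, HasDerivAt v (v' r) r) ∧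
    (∀ r ∈ Icc a b, HasDerivAt v' (v'' r) r) ∧ (∀ r ∈ Icc a b, |v r - u r| ≤ δ) ∧
    (∀ r ∈ Icc a b, v'' r + κ r * v r ≤ δ) := by
  set f := (Icc a b).indicator u with hf
  set g := (Icc a b).indicator (fun x => κ x * u x) with hg
  have hgc : ContinuousOn (fun x => κ x * u x) (Icc a b) := hκ.mul hu
  have hfi : MeasureTheory.Integrable f := (hu.integrableOn_Icc).integrable_indicator measurableSet_Icc
  have hgi : MeasureTheory.Integrable g := (hgc.integrableOn_Icc).integrable_indicator measurableSet_Icc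
  obtain ⟨K, hK⟩ := isCompact_Icc.exists_bound_of_continuousOn hκ
  obtain ⟨M, hM⟩ := isCompact_Icc.exists_bound_of_continuousOn hgc
  have ma : a ∈ Icc a b := ⟨le_rfl, hab.le⟩
  have hK0 : 0 ≤ K := (norm_nonneg _).trans (hK a ma)
  have hM0 : 0 ≤ M := (norm_nonneg _).trans (hM a ma)
  set η := δ / (2 * (2 + K)) with hη
  have hηpos : 0 < η := by positivity
  have hηe : (2 + K) * η = δ / 2 := by rw [hη]; field_simp
  obtain ⟨d1, hd1, hu1⟩ := Metric.uniformContinuousOn_iff.1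
    (isCompact_Icc.uniformContinuousOn_of_continuous hu) (η / 2) (by positivity)
  obtain ⟨d2, hd2, hu2⟩ := Metric.uniformContinuousOn_iff.1
    (isCompact_Icc.uniformContinuousOn_of_continuous hgc) (η / 2) (by positivity)
  set d := min d1 d2 with hd
  have hdpos : 0 < d := lt_min hd1 hd2
  obtain ⟨p, hp0, hp1, hpd, hpM⟩ : ∃ p : ℝ, 0 < p ∧ p < 1 ∧ p * (b - a) < d ∧ 2 * p * M ≤ δ / 2 := by
    have hba : 0 < b - a := by linarith
    refine ⟨min (1/2) (min (d / (2 * (b - a))) (δ / (4 * (M + 1)))), by positivity,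
      (min_le_left _ _).trans_lt (by norm_num), ?_, ?_⟩
    · have : min (1/2) (min (d / (2 * (b - a))) (δ / (4 * (M + 1)))) ≤ d / (2 * (b - a)) :=
        (min_le_right _ _).trans (min_le_left _ _)
      calc _ ≤ d / (2 * (b - a)) * (b - a) := mul_le_mul_of_nonneg_right this hba.le
        _ = d / 2 := by field_simp
        _ < d := by linarith
    · have : min (1/2) (min (d / (2 * (b - a))) (δ / (4 * (M + 1)))) ≤ δ / (4 * (M + 1)) :=
        (min_le_right _ _).trans (min_le_right _ _)
      calc _ ≤ 2 * (δ / (4 * (M + 1))) * M := by gcongr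
        _ = δ / 2 * (M / (M + 1)) := by field_simp; norm_num
        _ ≤ δ / 2 * 1 := by
          gcongr
          rw [div_le_one (by positivity)]; linarith
        _ = δ / 2 := mul_one _
  have hpb : 0 < p * (b - a) := mul_pos hp0 (by linarith)
  let φ : ContDiffBump (0:ℝ) := ⟨p * (b - a) / 8, p * (b - a) / 4, by positivity, by linarith⟩
  have hrout : φ.rOut = p * (b - a) / 4 := rfl
  set ρ := φ.normed MeasureTheory.volume with hρ
  have hρs : ContDiff ℝ (⊤ : ℕ∞) ρ := φ.contDiff_normed
  have hρc : HasCompactSupport ρ := φ.hasCompactSupport_normed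
  have hρs' : ContDiff ℝ (⊤ : ℕ∞) (deriv ρ) := by
    exact (contDiff_infty_iff_deriv.1 hρs).2
  set V := MeasureTheory.convolution ρ f (ContinuousLinearMap.lsmul ℝ ℝ) MeasureTheory.volume with hV
  set V' := MeasureTheory.convolution (deriv ρ) f (ContinuousLinearMap.lsmul ℝ ℝ) MeasureTheory.volume with hV'
  set V'' := MeasureTheory.convolution (deriv (deriv ρ)) f (ContinuousLinearMap.lsmul ℝ ℝ) MeasureTheory.volume
    with hV''
  set G := MeasureTheory.convolution ρ g (ContinuousLinearMap.lsmul ℝ ℝ) MeasureTheory.volume with hG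
  have dV : ∀ x, HasDerivAt V (V' x) x := fun x =>
    hρc.hasDerivAt_convolution_left _ (hρs.of_le (by exact_mod_cast le_top)) hfi.locallyIntegrable x
  have dV' : ∀ x, HasDerivAt V' (V'' x) x := fun x =>
    hρc.deriv.hasDerivAt_convolution_left _ (hρs'.of_le (by exact_mod_cast le_top))
      hfi.locallyIntegrable x
  let X : ℝ → ℝ := fun x => (1 - p) * x + p * ((a + b) / 2)
  have hX : ∀ x, HasDerivAt X (1 - p) x := fun x => by
    exact HasDerivAt.congr_deriv
      (((hasDerivAt_id x).const_mul (1 - p)).add_const (p * ((a + b) / 2))) (mul_one _)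
  have hXm : ∀ x ∈ Icc a b, ∀ y ∈ Metric.closedBall (X x) φ.rOut, y ∈ Ioo a b := by
    intro x hx y hy
    rw [Metric.mem_closedBall, Real.dist_eq, abs_le, hrout] at hy
    simp only [X] at hy
    constructor
    · nlinarith [hx.1, hx.2]
    · nlinarith [hx.1, hx.2]
  have hXI : ∀ x ∈ Icc a b, X x ∈ Icc a b := fun x hx =>
    Ioo_subset_Icc_self (hXm x hx _ (Metric.mem_closedBall_self φ.rOut_pos.le))
  have hXx : ∀ x ∈ Icc a b, dist (X x) x < d := by
    intro x hx
    rw [Real.dist_eq, abs_lt]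
    simp only [X]
    constructor <;> nlinarith [hx.1, hx.2]
  have estf : ∀ x ∈ Icc a b, |V (X x) - u x| ≤ η := by
    intro x hx
    have e1 : dist (V (X x)) (f (X x)) ≤ η / 2 := by
      apply φ.dist_normed_convolution_le hfi.aestronglyMeasurable
      intro y hy
      have hyI := Ioo_subset_Icc_self (hXm x hx y (Metric.ball_subset_closedBall hy))
      rw [hf, indicator_of_mem hyI, indicator_of_mem (hXI x hx)]
      refine (hu1 y hyI _ (hXI x hx) ?_).le
      have := Metric.mem_ball.1 hy
      have := min_le_left d1 d2
      linarith
    rw [hf, indicator_of_mem (hXI x hx)] at e1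
    have e2 := hu1 _ (hXI x hx) x hx ((hXx x hx).trans_le (min_le_left _ _))
    have := dist_triangle (V (X x)) (u (X x)) (u x)
    rw [← Real.dist_eq]; linarith
  have estg : ∀ x ∈ Icc a b, |G (X x) - κ x * u x| ≤ η := by
    intro x hx
    have e1 : dist (G (X x)) (g (X x)) ≤ η / 2 := by
      apply φ.dist_normed_convolution_le hgi.aestronglyMeasurable
      intro y hy
      have hyI := Ioo_subset_Icc_self (hXm x hx y (Metric.ball_subset_closedBall hy))
      rw [hg, indicator_of_mem hyI, indicator_of_mem (hXI x hx)]
      refine (hu2 y hyI _ (hXI x hx) ?_).le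
      have := Metric.mem_ball.1 hy
      have := min_le_right d1 d2
      linarith
    rw [hg, indicator_of_mem (hXI x hx)] at e1
    have e2 := hu2 _ (hXI x hx) x hx ((hXx x hx).trans_le (min_le_right _ _))
    have := dist_triangle (G (X x)) (κ (X x) * u (X x)) (κ x * u x)
    rw [← Real.dist_eq]; linarith
  have hVG : ∀ x ∈ Icc a b, V'' (X x) ≤ - G (X x) := by
    intro x hx
    have hdψ : deriv (fun y => ρ (X x - y)) = fun y => - deriv ρ (X x - y) := by
      funext y; rw [deriv_comp_const_sub]
    have hddψ : deriv (deriv (fun y => ρ (X x - y))) = fun y => deriv (deriv ρ) (X x - y) := by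
      rw [hdψ]; funext y
      rw [deriv.fun_neg, deriv_comp_const_sub, neg_neg]
    have hts : tsupport (fun y => ρ (X x - y)) ⊆ Metric.closedBall (X x) φ.rOut := by
      apply closure_minimal _ Metric.isClosed_closedBall
      intro y hy
      have : X x - y ∈ Function.support ρ := hy
      rw [hρ, φ.support_normed_eq] at this
      simp only [Metric.mem_ball, Metric.mem_closedBall, Real.dist_eq, sub_zero] at this ⊢
      rw [abs_sub_comm]; exact this.le
    have h := hdist (fun y => ρ (X x - y)) (hρs.comp (contDiff_const.sub contDiff_id))
      (HasCompactSupport.of_support_subset_isCompact (isCompact_closedBall (X x) φ.rOut)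
        (subset_closure.trans hts)) (fun y hy => hXm x hx y (hts hy)) (fun y => φ.nonneg_normed _)
    rw [hddψ, intervalIntegral.integral_of_le hab.le, intervalIntegral.integral_of_le hab.le,
      ← MeasureTheory.integral_Icc_eq_integral_Ioc, ← MeasureTheory.integral_Icc_eq_integral_Ioc,
      ← MeasureTheory.integral_indicator measurableSet_Icc, ← MeasureTheory.integral_indicator measurableSet_Icc] at h
    rw [hV'', hG, MeasureTheory.convolution_lsmul_swap, MeasureTheory.convolution_lsmul_swap]
    have g1 : (fun t => deriv (deriv ρ) (X x - t) • f t) =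
        (Icc a b).indicator (fun t => deriv (deriv ρ) (X x - t) * u t) := by
      funext y
      by_cases hy : y ∈ Icc a b
      · rw [hf, indicator_of_mem hy, indicator_of_mem hy, smul_eq_mul]
      · rw [hf, indicator_of_notMem hy, indicator_of_notMem hy, smul_zero]
    have g2 : (fun t => ρ (X x - t) • g t) =
        (Icc a b).indicator (fun t => ρ (X x - t) * κ t * u t) := by
      funext y
      by_cases hy : y ∈ Icc a b
      · rw [hg, indicator_of_mem hy, indicator_of_mem hy, smul_eq_mul, mul_assoc]
      · rw [hg, indicator_of_notMem hy, indicator_of_notMem hy, smul_zero]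
    rw [g1, g2]
    exact h
  refine ⟨fun x => V (X x), fun x => V' (X x) * (1 - p), fun x => V'' (X x) * (1 - p) * (1 - p),
    fun x _ => (dV _).comp x (hX x), fun x _ => ((dV' _).comp x (hX x)).mul_const _, ?_, ?_⟩
  · intro x hx
    have := estf x hx
    nlinarith
  · intro x hx
    have a1 := abs_le.1 (estf x hx)
    have a2 := abs_le.1 (estg x hx)
    have a3 := hVG x hx
    have a4 := abs_le.1 (hK x hx)
    have a5 := abs_le.1 (hM x hx)
    have x2 : κ x * (V (X x) - u x) ≤ K * η := by
      refine (le_abs_self _).trans ?_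
      rw [abs_mul]
      exact mul_le_mul (hK x hx) (estf x hx) (abs_nonneg _) hK0
    have q0 : 0 ≤ (1 - p) * (1 - p) := mul_self_nonneg _
    have q1 : (1 - p) * (1 - p) ≤ 1 := by nlinarith
    have a6 : V'' (X x) * ((1 - p) * (1 - p)) ≤ (η - κ x * u x) * ((1 - p) * (1 - p)) :=
      mul_le_mul_of_nonneg_right (by linarith) q0
    have a7 : η * ((1 - p) * (1 - p)) ≤ η * 1 := mul_le_mul_of_nonneg_left q1 hηpos.le
    have a8 : κ x * u x * (1 - (1 - p) * (1 - p)) ≤ M * (2 * p) := by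
      calc _ ≤ M * (1 - (1 - p) * (1 - p)) := mul_le_mul_of_nonneg_right a5.2 (by linarith)
        _ ≤ _ := mul_le_mul_of_nonneg_left (by nlinarith) hM0
    nlinarith

open Classical in
/-- If `u'' + κu ≤ 0` distributionally, then along any constant speed geodesic
`γ(t) = x + t(y-x)` of `[a,b]` with length `θ = |y-x|` one has
`u(γ t) ≥ σ_{κ⁻_γ}^{(1-t)}(θ) u(γ 0) + σ_{κ⁺_γ}^{(t)}(θ) u(γ 1)`, where the distortion
coefficients (possibly `∞`, with the convention `∞·0 = 0` in `ℝ≥0∞`) are expressed via the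
sin-solutions `sp`, `sm` for the curvatures `κ⁺_γ(r) = κ(γ̄ r)` and `κ⁻_γ(r) = κ(γ̄(θ-r))`. -/
theorem distributional_implies_distortion_inequality (a b : ℝ) (hab : a < b)
    (κ u : ℝ → ℝ) (hκ : ContinuousOn κ (Icc a b))
    (hu : ContinuousOn u (Icc a b)) (hunn : ∀ x ∈ Icc a b, 0 ≤ u x)
    (hdist : ∀ φ : ℝ → ℝ, ContDiff ℝ (⊤ : ℕ∞) φ → HasCompactSupport φ → tsupport φ ⊆ Ioo a b →
        (∀ x, 0 ≤ φ x) →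
        (∫ x in a..b, deriv (deriv φ) x * u x) ≤ -∫ x in a..b, φ x * κ x * u x) :
    ∀ x ∈ Icc a b, ∀ y ∈ Icc a b, ∀ sp sp' sm sm' : ℝ → ℝ,
      IsSinSolution (fun r => κ (x + (r / |y - x|) * (y - x))) sp sp' |y - x| →
      IsSinSolution (fun r => κ (x + (1 - r / |y - x|) * (y - x))) sm sm' |y - x| →
      ∀ t ∈ Icc (0:ℝ) 1,
        (if ∀ r ∈ Ioc (0:ℝ) |y - x|, 0 < sm r then
            ENNReal.ofReal (sm ((1 - t) * |y - x|) / sm |y - x|) else ⊤) *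
              ENNReal.ofReal (u x) +
          (if ∀ r ∈ Ioc (0:ℝ) |y - x|, 0 < sp r then
            ENNReal.ofReal (sp (t * |y - x|) / sp |y - x|) else ⊤) *
              ENNReal.ofReal (u y) ≤
          ENNReal.ofReal (u (x + t * (y - x))) := by
  intro x hx y hy sp sp' sm sm' hsp hsm t ht
  rcases eq_or_ne x y with hxy | hxy
  · subst hxy
    simp [hsp.1, hsm.1]
  set θ := |y - x| with hθd
  have hθ : 0 < θ := abs_pos.2 (sub_ne_zero.2 hxy.symm)
  obtain ⟨K, hK⟩ := isCompact_Icc.exists_bound_of_continuousOn hκ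
  have hmem : ∀ r ∈ Icc 0 θ, x + r / θ * (y - x) ∈ Icc a b := by
    intro r hr
    have h0 : 0 ≤ r / θ := div_nonneg hr.1 hθ.le
    have h1 : r / θ ≤ 1 := (div_le_one hθ).2 hr.2
    constructor
    · nlinarith [hx.1, hy.1]
    · nlinarith [hx.2, hy.2]
  have hee : (y - x) / θ * ((y - x) / θ) = 1 := by
    rw [div_mul_div_comm, hθd, abs_mul_abs_self]
    exact div_self (mul_self_ne_zero.2 (sub_ne_zero.2 hxy.symm))
  have hA : Approx (fun r => κ (x + r / θ * (y - x))) (fun r => u (x + r / θ * (y - x))) θ := by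
    intro δ hδ
    obtain ⟨v, v', v'', h1, h2, h3, h4⟩ := approx_main a b hab κ u hκ hu hdist δ hδ
    have hY : ∀ r, HasDerivAt (fun r => x + r / θ * (y - x)) ((y - x) / θ) r := by
      intro r
      refine HasDerivAt.congr_deriv
        ((((hasDerivAt_id r).div_const θ).mul_const (y - x)).const_add x) ?_
      ring
    refine ⟨fun r => v (x + r / θ * (y - x)), fun r => v' (x + r / θ * (y - x)) * ((y - x) / θ),
      fun r => v'' (x + r / θ * (y - x)), fun r hr => (h1 _ (hmem r hr)).comp r (hY r), ?_,
      fun r hr => h3 _ (hmem r hr), fun r hr => h4 _ (hmem r hr)⟩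
    intro r hr
    refine HasDerivAt.congr_deriv (((h2 _ (hmem r hr)).comp r (hY r)).mul_const _) ?_
    rw [mul_assoc, hee, mul_one]
  have hrev : ∀ r : ℝ, 1 - r / θ = (θ - r) / θ := fun r => by field_simp
  simp only [hrev] at hsm
  have hsm1 : IsSinSolution (fun r => (fun r => κ (x + r / θ * (y - x))) (θ - r)) sm sm' θ := hsm
  have hsp1 : IsSinSolution (fun r => (fun r => κ (x + (θ - r) / θ * (y - x))) (θ - r)) sp sp' θ := by
    simpa only [sub_sub_cancel] using hsp
  have hm' : ∀ r ∈ Icc 0 θ, θ - r ∈ Icc 0 θ := fun r hr => ⟨by linarith [hr.2], by linarith [hr.1]⟩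
  by_cases hp : ∀ r ∈ Ioc (0:ℝ) θ, 0 < sp r
  · have hm : ∀ r ∈ Ioc (0:ℝ) θ, 0 < sm r := pos_of_pos hθ hsm hsp1 hp
    rw [if_pos hp, if_pos hm]
    have hz : t * θ ∈ Icc 0 θ := ⟨mul_nonneg ht.1 hθ.le, by nlinarith [ht.2]⟩
    have hc := comparison hθ hA hsp hsm1 hp hm hz
    have hw := wronskian_sm hsp hsm1 θ ⟨hθ.le, le_rfl⟩
    simp only [sub_self, hsm.1, hsm.2.1, mul_zero, zero_add, mul_one] at hw
    have e1 : θ - t * θ = (1 - t) * θ := by ring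
    have e2 : t * θ / θ = t := by field_simp
    have e3 : θ / θ = 1 := div_self hθ.ne'
    simp only [e1, e2, e3, zero_div, zero_mul, add_zero, one_mul, add_sub_cancel] at hc
    have hmθ := hm θ ⟨hθ, le_rfl⟩
    have hsn : 0 ≤ sp (t * θ) := by
      rcases hz.1.eq_or_lt with h | h
      · rw [← h, hsp.1]
      · exact (hp _ ⟨h, hz.2⟩).le
    have hmn : 0 ≤ sm ((1 - t) * θ) := by
      have h1t : 0 ≤ (1 - t) * θ := mul_nonneg (by linarith [ht.2]) hθ.le
      rcases h1t.eq_or_lt with h | h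
      · rw [← h, hsm.1]
      · exact (hm _ ⟨h, by nlinarith [ht.1]⟩).le
    rw [hw, ← ENNReal.ofReal_mul (by positivity), ← ENNReal.ofReal_mul (by positivity),
      ← ENNReal.ofReal_add (mul_nonneg (by positivity) (hunn x hx))
        (mul_nonneg (by positivity) (hunn y hy))]
    apply ENNReal.ofReal_le_ofReal
    rw [div_mul_eq_mul_div, div_mul_eq_mul_div, ← add_div, div_le_iff₀ hmθ]
    exact hc
  · have hm : ¬ ∀ r ∈ Ioc (0:ℝ) θ, 0 < sm r := fun h => hp (pos_of_pos hθ hsp hsm1 h)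
    have v1 := vanish hA (fun r hr => hunn _ (hmem r hr)) (fun r hr => hK _ (hmem r hr)) hsp hp
    have v2 := vanish hA.reverse (fun r hr => hunn _ (hmem _ (hm' r hr)))
      (fun r hr => hK _ (hmem _ (hm' r hr))) hsm hm
    have e3 : θ / θ = 1 := div_self hθ.ne'
    simp only [e3, one_mul, add_sub_cancel] at v1
    simp only [sub_self, zero_div, zero_mul, add_zero] at v2
    rw [v1, v2]
    simp
end
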